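/- Let M^n be a complete Riemannian manifold isometrically immersed in Euclidean space ℝ^{n+k}, with second fundamental form α and nullity distribution 𝒩_p = {v ∈ T_pM : α(v, w) = 0 for all w ∈ T_pM}. Let μ be the minimal value of dim 𝒩_p over M. Then through every point p with dim 𝒩_p = μ, the maximal integral manifold of 𝒩 is an open subset of an affine subspace p + 𝒩_p of ℝ^{n+k} which, being complete, is the whole affine subspace; in particular M contains the full μ-dimensional affine subspace p + 𝒩_p through each such point p. -/

import Mathlib

noncomputable section

open Set

/-- The three model space forms: Euclidean space, the round sphere, hyperbolic space. -/
inductive SpaceFormKind : Type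
  | euclidean : SpaceFormKind
  | sphere : SpaceFormKind
  | hyperbolic : SpaceFormKind

/-- The sign of the `i`-th coordinate in the ambient bilinear form: for the hyperbolic case the
ambient linear space is the Lorentz space `ℝ^{D-1,1}` whose last coordinate is timelike. -/
def formSign (k : SpaceFormKind) (D : ℕ) (i : Fin D) : ℝ :=
  match k with
  | .hyperbolic => if (i : ℕ) + 1 = D then -1 else 1
  | _ => 1

/-- The ambient bilinear form: the Euclidean inner product in the euclidean and spherical cases,
the Lorentz (Minkowski) form in the hyperbolic case. -/
def aForm (k : SpaceFormKind) {D : ℕ} (x y : EuclideanSpace ℝ (Fin D)) : ℝ :=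
  ∑ i, formSign k D i * x i * y i

/-- The space form, realized inside its ambient linear space: all of `ℝ^D`, the unit sphere,
or the hyperboloid model of hyperbolic space in Lorentz space. -/
def spaceForm (k : SpaceFormKind) (D : ℕ) : Set (EuclideanSpace ℝ (Fin D)) :=
  match k with
  | .euclidean => Set.univ
  | .sphere => {x | aForm .sphere x x = 1}
  | .hyperbolic => {x | aForm .hyperbolic x x = -1 ∧ ∀ i : Fin D, (i : ℕ) + 1 = D → 0 < x i}

/-- The normal space of the space form itself inside the ambient linear space at a point `p`:
trivial in the euclidean case, and spanned by the position vector in the other two cases. -/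
def radialAt (k : SpaceFormKind) {D : ℕ} (p : EuclideanSpace ℝ (Fin D)) :
    Submodule ℝ (EuclideanSpace ℝ (Fin D)) :=
  match k with
  | .euclidean => ⊥
  | _ => Submodule.span ℝ {p}

/-- The tangent space of a subset `S ⊆ ℝ^D` at `p`: the span of all velocities at `0` of smooth
curves inside `S` passing through `p` at time `0`. -/
def TangentAt {D : ℕ} (S : Set (EuclideanSpace ℝ (Fin D))) (p : EuclideanSpace ℝ (Fin D)) :
    Submodule ℝ (EuclideanSpace ℝ (Fin D)) :=
  Submodule.span ℝ {v | ∃ c : ℝ → EuclideanSpace ℝ (Fin D),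
    ContDiff ℝ (⊤ : ℕ∞) c ∧ (∀ t, c t ∈ S) ∧ c 0 = p ∧ deriv c 0 = v}

/-- `φ : U → ℝ^D` is a (smooth, embedded) local parametrization of `S` around `p`. -/
structure IsLocalParam {D : ℕ} (S : Set (EuclideanSpace ℝ (Fin D))) (n : ℕ)
    (φ : EuclideanSpace ℝ (Fin n) → EuclideanSpace ℝ (Fin D))
    (U : Set (EuclideanSpace ℝ (Fin n))) (p : EuclideanSpace ℝ (Fin D)) : Prop where
  isOpen : IsOpen U
  smooth : ContDiffOn ℝ (⊤ : ℕ∞) φ U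
  immersion : ∀ x ∈ U, Function.Injective (fderivWithin ℝ φ U x)
  injOn : Set.InjOn φ U
  openImage : ∃ V, IsOpen V ∧ φ '' U = S ∩ V
  mem : p ∈ φ '' U
  embedding : ∃ ψ, ContinuousOn ψ (φ '' U) ∧ ∀ x ∈ U, ψ (φ x) = x

/-- `S ⊆ ℝ^D` is an `n`-dimensional smooth embedded submanifold. -/
def IsSubmanifold {D : ℕ} (S : Set (EuclideanSpace ℝ (Fin D))) (n : ℕ) : Prop :=
  ∀ p ∈ S, ∃ φ U, IsLocalParam S n φ U p

/-- The nullity space at `p` of the second fundamental form `α` of `S`, viewed as a submanifold of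
the space form of kind `k`:  a tangent vector `v` is in the nullity iff `α(v, w) = 0` for all
`w ∈ T_pS`; concretely, iff for every smooth tangent vector field `W` along a smooth curve `c` in
`S` with `c(0) = p`, `c'(0) = v`, the derivative `W'(0)` has no component normal to `S` inside the
space form, i.e. `W'(0)` lies in the sum of `T_pS` and the normal space of the space form itself. -/
def nullityAt (k : SpaceFormKind) {D : ℕ} (S : Set (EuclideanSpace ℝ (Fin D)))
    (p : EuclideanSpace ℝ (Fin D)) : Set (EuclideanSpace ℝ (Fin D)) :=
  {v | v ∈ TangentAt S p ∧ ∀ c W : ℝ → EuclideanSpace ℝ (Fin D),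
    ContDiff ℝ (⊤ : ℕ∞) c → (∀ t, c t ∈ S) → c 0 = p → deriv c 0 = v →
    ContDiff ℝ (⊤ : ℕ∞) W → (∀ t, W t ∈ TangentAt S (c t)) →
    deriv W 0 ∈ TangentAt S p ⊔ radialAt k p}

/-- The index of nullity of `S` at `p`. -/
def nullityIndex (k : SpaceFormKind) {D : ℕ} (S : Set (EuclideanSpace ℝ (Fin D)))
    (p : EuclideanSpace ℝ (Fin D)) : ℕ :=
  Set.finrank ℝ (nullityAt k S p)

/-- `γ : ℝ → ℝ^D` is a geodesic of the Riemannian (resp. Lorentzian-induced) submanifold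
`S` of the space form of kind `k`: a smooth curve in `S` whose acceleration is orthogonal,
with respect to the ambient bilinear form, to all tangent spaces of `S`. -/
structure IsGeodesicOn (k : SpaceFormKind) {D : ℕ} (S : Set (EuclideanSpace ℝ (Fin D)))
    (γ : ℝ → EuclideanSpace ℝ (Fin D)) : Prop where
  smooth : ContDiff ℝ (⊤ : ℕ∞) γ
  mem : ∀ t, γ t ∈ S
  accel_normal : ∀ t, ∀ v ∈ TangentAt S (γ t), aForm k (deriv (deriv γ) t) v = 0

/-- `S` is a (geodesically, equivalently metrically) complete Riemannian manifold: every
initial condition gives rise to a geodesic defined on all of `ℝ`. -/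
def GeodComplete (k : SpaceFormKind) {D : ℕ} (S : Set (EuclideanSpace ℝ (Fin D))) : Prop :=
  ∀ p ∈ S, ∀ v ∈ TangentAt S p, ∃ γ, IsGeodesicOn k S γ ∧ γ 0 = p ∧ deriv γ 0 = v

/-- The set of points of `S` where the index of nullity is minimal. -/
def minNullitySet (k : SpaceFormKind) {D : ℕ} (S : Set (EuclideanSpace ℝ (Fin D))) :
    Set (EuclideanSpace ℝ (Fin D)) :=
  {q | q ∈ S ∧ ∀ r ∈ S, nullityIndex k S q ≤ nullityIndex k S r}

/-- The maximal integral manifold (leaf) through `p` of the nullity distribution of `S`,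
restricted to the subset `A`: all points reachable from `p` by smooth curves inside `A`
everywhere tangent to the nullity distribution. -/
def leafThrough (k : SpaceFormKind) {D : ℕ} (S A : Set (EuclideanSpace ℝ (Fin D)))
    (p : EuclideanSpace ℝ (Fin D)) : Set (EuclideanSpace ℝ (Fin D)) :=
  {q | ∃ c : ℝ → EuclideanSpace ℝ (Fin D), ContDiff ℝ (⊤ : ℕ∞) c ∧ (∀ t, c t ∈ A) ∧
    (∀ t, deriv c t ∈ nullityAt k S (c t)) ∧ c 0 = p ∧ c 1 = q}

/-- The dimension of the ambient linear space: `n + k` for a submanifold `M^n ⊆ ℝ^{n+k}`,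
`n + k + 1` for `M^n ⊆ S^{n+k} ⊆ ℝ^{n+k+1}` and for `M^n ⊆ H^{n+k} ⊆ ℝ^{n+k,1}`. -/
def ambientDim (k : SpaceFormKind) (n codim : ℕ) : ℕ :=
  match k with
  | .euclidean => n + codim
  | _ => n + codim + 1

/-! The orthogonal projections onto `TangentAt S x` and, on the relatively open set where the index
of nullity is minimal, onto the nullity spaces have smooth extensions `P` and `N`. The second
fundamental form is the derivative of `P`: a tangent vector `v` at `x` is in the nullity if and only
if `fderiv ℝ P x v = 0`. Symmetry of the second derivative of `P` (the Codazzi equation) shows that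
the nullity distribution is autoparallel, which amounts to `fderiv ℝ N x v = 0` for `v` in the
nullity. Hence nullity spaces are constant along leaves, leaves lie in the corresponding affine
subspaces, and geodesics tangent to the nullity are straight lines as long as they stay in the
minimal set.

They never leave it. Let the line `p + t • v` be in the minimal set for `0 ≤ t < b`, let `w` be
tangent at `p` and put `K = fderiv ℝ N p w v`. Differentiating `fderiv ℝ N y (N y u) = 0` gives a
linear differential equation for `fderiv ℝ N (p + t • v) (w + t • K) v - K`, which therefore
vanishes. Differentiating `fderiv ℝ P y (N y u) = 0` then shows that
`fderiv ℝ P (p + t • v) (w + t • K)` does not depend on `t`. So at the end point `p + b • v` the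
second fundamental form has at least the rank that it has at `p`, and the index of nullity is still
minimal there. -/

open scoped Topology ContDiff

section Calculus

theorem eq_zero_of_hasDerivAt_clm_apply {E : Type*} [NormedAddCommGroup E] [NormedSpace ℝ E]
    {L : ℝ → E →L[ℝ] E} {w : ℝ → E} {a b : ℝ} (hL : ContinuousOn L (Icc a b))
    (hw : ∀ t ∈ Icc a b, HasDerivAt w (L t (w t)) t) (ha : w a = 0) :
    ∀ t ∈ Icc a b, w t = 0 := by
  obtain ⟨C, hC⟩ := isCompact_Icc.exists_bound_of_continuousOn hL
  refine eq_zero_of_abs_deriv_le_mul_abs_self_of_eq_zero_right (K := C)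
    (fun t ht => (hw t ht).continuousAt.continuousWithinAt)
    (fun t ht => (hw t (Ico_subset_Icc_self ht)).hasDerivWithinAt) ha fun t ht => ?_
  exact (L t).le_of_opNorm_le (hC t (Ico_subset_Icc_self ht)) (w t)

theorem Ici_subset_of_isOpen_of_forall_Ico_subset {V : Set ℝ} {a : ℝ} (hV : IsOpen V)
    (h : ∀ b, a ≤ b → Ico a b ⊆ V → b ∈ V) : Ici a ⊆ V := by
  by_contra hne
  have hB : (Ici a \ V).Nonempty := sdiff_nonempty.2 hne
  have hbdd : BddBelow (Ici a \ V) := ⟨a, fun t ht => ht.1⟩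
  have hinf : sInf (Ici a \ V) ∈ Ici a \ V := (isClosed_Ici.sdiff hV).csInf_mem hB hbdd
  exact hinf.2 <| h _ hinf.1 fun t ht => by_contra fun htV =>
    ht.2.not_ge (csInf_le hbdd ⟨ht.1, htV⟩)

theorem exists_contDiff_curve_forall_mem_of_isOpen {E : Type*} [NormedAddCommGroup E]
    [NormedSpace ℝ E] {O : Set E} (hO : IsOpen O) {x : E} (hx : x ∈ O) (v : E) :
    ∃ c : ℝ → E, ContDiff ℝ ∞ c ∧ (∀ t, c t ∈ O) ∧ c 0 = x ∧ HasDerivAt c v 0 := by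
  obtain ⟨ε, hε, hball⟩ := Metric.isOpen_iff.1 hO x hx
  obtain ⟨δ, hδ, hδv⟩ : ∃ δ > 0, δ * ‖v‖ < ε := by
    refine ⟨ε / (‖v‖ + 1), by positivity, ?_⟩
    rw [div_mul_eq_mul_div, div_lt_iff₀ (by positivity)]
    nlinarith
  refine ⟨fun t => x + (δ * Real.sin (t / δ)) • v, by fun_prop, fun t => hball ?_, by simp, ?_⟩
  · rw [mem_ball_iff_norm, add_sub_cancel_left, norm_smul, norm_mul, Real.norm_of_nonneg hδ.le]
    refine lt_of_le_of_lt ?_ hδv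
    gcongr
    exact mul_le_of_le_one_right hδ.le (Real.abs_sin_le_one _)
  · have hsin : HasDerivAt (fun t : ℝ => δ * Real.sin (t / δ)) 1 0 := by
      simpa [hδ.ne'] using! (((hasDerivAt_id (0 : ℝ)).div_const δ).sin).const_mul δ
    simpa using! (hsin.smul_const v).const_add x

theorem hasDerivAt_add_smul_const {E : Type*} [NormedAddCommGroup E] [NormedSpace ℝ E]
    (p v : E) (t : ℝ) : HasDerivAt (fun s : ℝ => p + s • v) v t := by
  simpa using! ((hasDerivAt_id t).smul_const v).const_add p

theorem contDiffAt_clm_prod {X E F G : Type*} [NormedAddCommGroup X] [NormedSpace ℝ X]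
    [NormedAddCommGroup E] [NormedSpace ℝ E] [NormedAddCommGroup F] [NormedSpace ℝ F]
    [NormedAddCommGroup G] [NormedSpace ℝ G] {n : WithTop ℕ∞} {x : X} {f : X → E →L[ℝ] F}
    {g : X → E →L[ℝ] G} (hf : ContDiffAt ℝ n f x) (hg : ContDiffAt ℝ n g x) :
    ContDiffAt ℝ n (fun y => (f y).prod (g y)) x := by
  have h := ((contDiffAt_const (c := ContinuousLinearMap.inl ℝ F G)).clm_comp hf).add
    ((contDiffAt_const (c := ContinuousLinearMap.inr ℝ F G)).clm_comp hg)
  convert h using 2 with y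
  ext v <;> simp

theorem hasDerivAt_clm_apply_add_smul_const {X E F : Type*} [NormedAddCommGroup X]
    [NormedSpace ℝ X] [NormedAddCommGroup E] [NormedSpace ℝ E] [NormedAddCommGroup F]
    [NormedSpace ℝ F] {B : X → E →L[ℝ] F} {B' : X →L[ℝ] E →L[ℝ] F} {p v : X} {t : ℝ}
    (hB : HasFDerivAt B B' (p + t • v)) (w u : E) :
    HasDerivAt (fun s : ℝ => B (p + s • v) (w + s • u))
      (B' v (w + t • u) + B (p + t • v) u) t := by
  have hBv : HasDerivAt (fun s : ℝ => B (p + s • v)) (B' v) t :=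
    hB.comp_hasDerivAt t (hasDerivAt_add_smul_const p v t)
  exact hBv.clm_apply (hasDerivAt_add_smul_const w u t)

theorem exists_contDiffOn_leftInvOn_of_hasLeftInverse_fderiv {E F : Type*} [NormedAddCommGroup E]
    [NormedSpace ℝ E] [CompleteSpace E] [NormedAddCommGroup F] [NormedSpace ℝ F]
    {n : WithTop ℕ∞} (hn : 1 ≤ n) {φ : E → F} {U : Set E} (hU : IsOpen U)
    (hφ : ContDiffOn ℝ n φ U) {u : E} (hu : u ∈ U) (hinv : (fderiv ℝ φ u).HasLeftInverse) :
    ∃ (W : Set E) (O : Set F) (G : F → E), IsOpen W ∧ u ∈ W ∧ IsOpen O ∧ MapsTo φ W O ∧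
      ContDiffOn ℝ n G O ∧ MapsTo G O U ∧ LeftInvOn G φ W := by
  have hn0 : n ≠ 0 := (zero_lt_one.trans_le hn).ne'
  let L := hinv.leftInverse
  let g : E → E := L ∘ φ
  have hgU : ContDiffOn ℝ n g U := L.contDiff.comp_contDiffOn hφ
  have hg : ∀ x ∈ U, ContDiffAt ℝ n g x := fun x hx => hgU.contDiffAt (hU.mem_nhds hx)
  have hgu : HasFDerivAt g (ContinuousLinearEquiv.refl ℝ E : E →L[ℝ] E) u := by
    have hφu := ((hφ.contDiffAt (hU.mem_nhds hu)).differentiableAt hn0).hasFDerivAt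
    convert L.hasFDerivAt.comp u hφu using 1
    ext x
    exact (hinv.leftInverse_leftInverse x).symm
  have hopen : IsOpen (U ∩ fderiv ℝ g ⁻¹' range ((↑) : (E ≃L[ℝ] E) → E →L[ℝ] E)) :=
    (hgU.continuousOn_fderiv_of_isOpen hU hn).isOpen_inter_preimage hU
      (ContinuousLinearEquiv.isOpen)
  let e := ((hg u hu).toOpenPartialHomeomorph g hgu hn0).restrOpen _ hopen
  have hesymm : ContDiffOn ℝ n e.symm e.target := fun y hy => by
    obtain ⟨-, hyU, e', he'⟩ := e.map_target hy
    have hderiv : HasFDerivAt g (e' : E →L[ℝ] E) (e.symm y) :=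
      he' ▸ ((hg _ hyU).differentiableAt hn0).hasFDerivAt
    exact (e.contDiffAt_symm hy hderiv (hg _ hyU)).contDiffWithinAt
  refine ⟨e.source, L ⁻¹' e.target, e.symm ∘ L, e.open_source, ?_, e.open_target.preimage
    L.continuous, fun x hx => e.map_source hx, hesymm.comp L.contDiff.contDiffOn fun x hx => hx,
    fun y hy => (e.map_target hy).2.1, fun x hx => e.left_inv hx⟩
  exact ⟨(hg u hu).mem_toOpenPartialHomeomorph_source hgu hn0, hu, _, hgu.fderiv.symm⟩

end Calculus

section Gluing

open scoped Manifold

/-- The local functions are averaged by a partition of unity on the union of their domains. -/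
theorem exists_contDiffAt_eqOn_of_local {E F : Type*} [NormedAddCommGroup E] [NormedSpace ℝ E]
    [FiniteDimensional ℝ E] [NormedAddCommGroup F] [NormedSpace ℝ F] {n : ℕ} {A : Set E}
    {f : E → F} (h : ∀ x ∈ A, ∃ g, ContDiffAt ℝ n g x ∧ g =ᶠ[𝓝[A] x] f) :
    ∃ g, (∀ x ∈ A, ContDiffAt ℝ n g x) ∧ EqOn g f A := by
  let O : TopologicalSpace.Opens E :=
    ⟨interior {y | ∃ U ∈ 𝓝 y, ∃ g, ContDiffOn ℝ n g U ∧ EqOn g f (A ∩ U)}, isOpen_interior⟩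
  have hAO : A ⊆ O := fun x hx => by
    obtain ⟨g, hg, hgf⟩ := h x hx
    have hU := (hg.eventually (by simp)).and (eventually_nhdsWithin_iff.1 hgf)
    obtain ⟨U, hUsub, hUo, hxU⟩ := mem_nhds_iff.1 hU
    exact mem_interior.2 ⟨U, fun y hy => ⟨U, hUo.mem_nhds hy, g,
      fun z hz => (hUsub hz).1.contDiffWithinAt, fun z hz => (hUsub hz.2).2 hz.1⟩, hUo, hxU⟩
  have : ProperSpace E := FiniteDimensional.proper ℝ E
  have : LocallyCompactSpace O := O.isOpen.locallyCompactSpace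
  obtain ⟨g, hg⟩ := exists_contMDiffMap_forall_mem_convex_of_local 𝓘(ℝ, E) (n := n) (M := O)
    (F := F) (t := fun y => {z | (y : E) ∈ A → z = f y})
    (fun y => by
      intro a ha b hb s t _ _ hst hy
      simp only [ha hy, hb hy, ← add_smul, hst, one_smul])
    (fun x => by
      obtain ⟨U, hU, g, hg, hgf⟩ := interior_subset x.2
      refine ⟨Subtype.val ⁻¹' U, continuousAt_subtype_val hU, fun y => g y, ?_, fun y hy hyA =>
        hgf ⟨hyA, hy⟩⟩
      exact hg.contMDiffOn.comp contMDiff_subtype_val.contMDiffOn fun y hy => hy)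
  have hext : ∀ y : O, Function.extend ((↑) : O → E) g (0 : E → F) y = g y :=
    Subtype.val_injective.extend_apply _ _
  refine ⟨Function.extend ((↑) : O → E) g (0 : E → F), fun x hx => ?_, fun x hx => ?_⟩
  · rw [← contMDiffAt_iff_contDiffAt]
    refine (contMDiffAt_subtype_iff (U := O) (x := ⟨x, hAO hx⟩)).1 ?_
    simp only [hext]
    exact g.contMDiff _
  · exact (hext ⟨x, hAO hx⟩).trans (hg ⟨x, hAO hx⟩ hx)

end Gluing

section Projections

variable {E : Type*} [NormedAddCommGroup E] [InnerProductSpace ℝ E] [FiniteDimensional ℝ E]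

theorem eq_zero_of_isSelfAdjoint_of_mul_add_mul_eq {R : Type*} [NonUnitalRing R] [StarRing R]
    {a p : R} (ha : IsSelfAdjoint a) (hp : IsSelfAdjoint p) (hadd : p * a + a * p = a)
    (hap : a * p = 0) : a = 0 := by
  have hpa : p * a = 0 := by
    simpa only [star_mul, ha.star_eq, hp.star_eq, star_zero] using congrArg star hap
  rw [← hadd, hap, hpa, add_zero]

theorem isUnit_add_star_sub_one_of_isProj {K : Submodule ℝ E} {Z : E →L[ℝ] E}
    (hZ : LinearMap.IsProj K Z) : IsUnit (Z + star Z - 1) := by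
  rw [ContinuousLinearMap.isUnit_iff_isUnit_toLinearMap, LinearMap.isUnit_iff_ker_eq_bot,
    Submodule.eq_bot_iff]
  intro x hx
  have hadj : ∀ y z, inner ℝ (star Z y) z = inner ℝ y (Z z) := fun y z => by
    rw [ContinuousLinearMap.star_eq_adjoint, ContinuousLinearMap.adjoint_inner_left]
  have hx' : Z x + star Z x = x := sub_eq_zero.1 hx
  have hZx : Z x = 0 := by
    have h : inner ℝ (Z x + star Z x) (Z x) = inner ℝ x (Z x) := by rw [hx']
    rw [inner_add_left, hadj, hZ.map_id _ (hZ.map_mem x), add_eq_right] at h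
    exact inner_self_eq_zero.1 h
  have hxx : inner ℝ (Z x + star Z x) x = inner ℝ x x := by rw [hx']
  rw [inner_add_left, hadj, hZx, inner_zero_left, inner_zero_right, add_zero] at hxx
  exact inner_self_eq_zero.1 hxx.symm

theorem starProjection_eq_mul_ringInverse {K : Submodule ℝ E} {Z : E →L[ℝ] E}
    (hZ : LinearMap.IsProj K Z) :
    K.starProjection = Z * Ring.inverse (Z + star Z - 1) := by
  have hPZ : K.starProjection * Z = Z := by
    ext x
    exact Submodule.starProjection_eq_self_iff.2 (hZ.map_mem x)
  have hZP : Z * K.starProjection = K.starProjection := by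
    ext x
    exact hZ.map_id _ (Submodule.starProjection_apply_mem _ _)
  have hPstar : K.starProjection * star Z = K.starProjection := by
    simpa only [star_mul, (isSelfAdjoint_starProjection K).star_eq] using congrArg star hZP
  have hP : K.starProjection * (Z + star Z - 1) = Z := by
    rw [mul_sub, mul_add, hPZ, hPstar, mul_one, add_sub_cancel_right]
  have hunit := isUnit_add_star_sub_one_of_isProj hZ
  exact (Ring.eq_mul_inverse_iff_mul_eq _ _ _ hunit).2 hP

theorem exists_contDiffAt_eq_starProjection_of_isProj {X : Type*} [NormedAddCommGroup X]
    [NormedSpace ℝ X] {n : WithTop ℕ∞} {A : Set X} {q : X} (hq : q ∈ A) {K : X → Submodule ℝ E}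
    {Z : X → E →L[ℝ] E} (hZ : ContDiffAt ℝ n Z q)
    (hproj : ∀ᶠ x in 𝓝[A] q, LinearMap.IsProj (K x) (Z x)) :
    ∃ P : X → E →L[ℝ] E, ContDiffAt ℝ n P q ∧ P =ᶠ[𝓝[A] q] fun x => (K x).starProjection := by
  refine ⟨fun x => Z x * Ring.inverse (Z x + star (Z x) - 1), hZ.clm_comp ?_,
    hproj.mono fun x hx => (starProjection_eq_mul_ringInverse hx).symm⟩
  obtain ⟨u, hu⟩ := isUnit_add_star_sub_one_of_isProj (hproj.self_of_nhdsWithin hq)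
  have hstar : ContDiffAt ℝ n (fun x => star (Z x)) q :=
    (starL' ℝ : (E →L[ℝ] E) ≃L[ℝ] (E →L[ℝ] E)).contDiff.contDiffAt.comp q hZ
  have hinv := contDiffAt_ringInverse ℝ (n := n) u
  rw [hu] at hinv
  exact hinv.comp q ((hZ.add hstar).sub contDiffAt_const)

end Projections

section ConstantRank

theorem exists_comp_eq_of_ker_le_ker {k V W U : Type*} [Field k] [AddCommGroup V] [Module k V]
    [AddCommGroup W] [Module k W] [AddCommGroup U] [Module k U] {f : V →ₗ[k] W} {g : V →ₗ[k] U}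
    (h : LinearMap.ker f ≤ LinearMap.ker g) : ∃ C : W →ₗ[k] U, C ∘ₗ f = g := by
  obtain ⟨r, hr⟩ := LinearMap.exists_leftInverse_of_injective ((LinearMap.ker f).liftQ f le_rfl)
    (Submodule.ker_liftQ_eq_bot _ _ _ le_rfl)
  refine ⟨(LinearMap.ker f).liftQ g h ∘ₗ r, LinearMap.ext fun v => ?_⟩
  exact congrArg ((LinearMap.ker f).liftQ g h) (LinearMap.congr_fun hr (Submodule.Quotient.mk v))

theorem finrank_inf_ker_le_of_map_le_map {k V W : Type*} [Field k] [AddCommGroup V] [Module k V]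
    [FiniteDimensional k V] [AddCommGroup W] [Module k W] {f g : V →ₗ[k] W} {T : Submodule k V}
    (h : T.map f ≤ T.map g) :
    Module.finrank k (T ⊓ g.ker : Submodule k V) ≤
      Module.finrank k (T ⊓ f.ker : Submodule k V) := by
  have rank_nullity : ∀ l : V →ₗ[k] W, Module.finrank k (T.map l) +
      Module.finrank k (T ⊓ l.ker : Submodule k V) = Module.finrank k T := fun l => by
    rw [← LinearMap.finrank_range_add_finrank_ker (l.domRestrict T), LinearMap.range_domRestrict,
      LinearMap.ker_domRestrict, ← Submodule.finrank_map_subtype_eq T (l.ker.comap T.subtype),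
      Submodule.map_comap_subtype]
  have hle := Submodule.finrank_mono h
  have hf := rank_nullity f
  have hg := rank_nullity g
  omega

variable {E G : Type*} [NormedAddCommGroup E] [InnerProductSpace ℝ E] [FiniteDimensional ℝ E]
  [NormedAddCommGroup G] [NormedSpace ℝ G]

theorem exists_comp_add_starProjection_ker_eq_one [FiniteDimensional ℝ G] (B : E →L[ℝ] G) :
    ∃ C : G →L[ℝ] E, C ∘L B + B.ker.starProjection = 1 := by
  obtain ⟨C, hC⟩ := exists_comp_eq_of_ker_le_ker (f := (B : E →ₗ[ℝ] G))
    (g := ((1 - B.ker.starProjection : E →L[ℝ] E) : E →ₗ[ℝ] E)) fun v hv =>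
      sub_eq_zero.2 (Submodule.starProjection_eq_self_iff.2 hv).symm
  refine ⟨LinearMap.toContinuousLinearMap C, ContinuousLinearMap.ext fun v => ?_⟩
  exact eq_sub_iff_add_eq.1 (LinearMap.congr_fun hC v)

section

variable {K : Submodule ℝ E} {B : E →L[ℝ] G} {C : G →L[ℝ] E}

theorem map_ker_comp_add_starProjection_le :
    B.ker.map (C ∘L B + K.starProjection : E →L[ℝ] E).toLinearMap ≤ K := by
  rintro _ ⟨v, hv, rfl⟩
  have hBv : B v = 0 := hv
  simp [hBv]

theorem finrank_map_of_isUnit {H : E →L[ℝ] E} (hH : IsUnit H) (V : Submodule ℝ E) :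
    Module.finrank ℝ (V.map H.toLinearMap) = Module.finrank ℝ V :=
  have hinj : Function.Injective H := (ContinuousLinearMap.isUnit_iff_bijective.1 hH).injective
  (Submodule.equivMapOfInjective H.toLinearMap hinj V).finrank_eq.symm

theorem finrank_ker_le_of_isUnit_comp_add_starProjection
    (hH : IsUnit (C ∘L B + K.starProjection)) :
    Module.finrank ℝ B.ker ≤ Module.finrank ℝ K :=
  (finrank_map_of_isUnit hH _).symm.trans_le
    (Submodule.finrank_mono map_ker_comp_add_starProjection_le)

theorem isProj_ker_of_isUnit_comp_add_starProjection
    (hH : IsUnit (C ∘L B + K.starProjection))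
    (hrank : Module.finrank ℝ B.ker = Module.finrank ℝ K) :
    LinearMap.IsProj B.ker (Ring.inverse (C ∘L B + K.starProjection) * K.starProjection) := by
  set H : E →L[ℝ] E := C ∘L B + K.starProjection with hHdef
  have hinv : ∀ v, Ring.inverse H (H v) = v := fun v =>
    DFunLike.congr_fun (Ring.inverse_mul_cancel H hH) v
  have hHker : ∀ v ∈ B.ker, H v = K.starProjection v := fun v hv => by
    have hBv : B v = 0 := hv
    simp [hHdef, hBv]
  have hmap : B.ker.map H.toLinearMap = K :=
    Submodule.eq_of_le_of_finrank_eq map_ker_comp_add_starProjection_le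
      ((finrank_map_of_isUnit hH _).trans hrank)
  refine ⟨fun v => ?_, fun v hv => ?_⟩
  · obtain ⟨w, hw, hwv⟩ : K.starProjection v ∈ B.ker.map H.toLinearMap :=
      hmap ▸ Submodule.starProjection_apply_mem K v
    rw [mul_apply_eq_comp, ← hwv]
    exact (hinv w).symm ▸ hw
  · rw [mul_apply_eq_comp, ← hHker v hv, hinv]

end

variable [FiniteDimensional ℝ G]

theorem exists_eventually_isUnit_comp_add_starProjection {X : Type*} [TopologicalSpace X]
    {B : X → E →L[ℝ] G} {q : X} (hB : ContinuousAt B q) :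
    ∃ C : G →L[ℝ] E, C ∘L B q + (B q).ker.starProjection = 1 ∧
      ∀ᶠ x in 𝓝 q, IsUnit (C ∘L B x + (B q).ker.starProjection) := by
  obtain ⟨C, hC⟩ := exists_comp_add_starProjection_ker_eq_one (B q)
  have hH : ContinuousAt (fun x => C ∘L B x + (B q).ker.starProjection) q :=
    (continuousAt_const.clm_comp hB).add continuousAt_const
  exact ⟨C, hC, hH.eventually_mem (Units.isOpen.mem_nhds (hC ▸ isUnit_one))⟩

theorem eventually_finrank_ker_le {X : Type*} [TopologicalSpace X] {B : X → E →L[ℝ] G} {q : X}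
    (hB : ContinuousAt B q) :
    ∀ᶠ x in 𝓝 q, Module.finrank ℝ (B x).ker ≤ Module.finrank ℝ (B q).ker := by
  obtain ⟨C, -, hunit⟩ := exists_eventually_isUnit_comp_add_starProjection hB
  exact hunit.mono fun x hx => finrank_ker_le_of_isUnit_comp_add_starProjection hx

theorem exists_contDiffAt_isProj_ker {X : Type*} [NormedAddCommGroup X] [NormedSpace ℝ X]
    {n : WithTop ℕ∞} {B : X → E →L[ℝ] G} {q : X} (hB : ContDiffAt ℝ n B q) :
    ∃ Z : X → E →L[ℝ] E, ContDiffAt ℝ n Z q ∧ ∀ᶠ x in 𝓝 q,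
      Module.finrank ℝ (B x).ker = Module.finrank ℝ (B q).ker →
        LinearMap.IsProj (B x).ker (Z x) := by
  obtain ⟨C, hC, hunit⟩ := exists_eventually_isUnit_comp_add_starProjection hB.continuousAt
  refine ⟨fun x => Ring.inverse (C ∘L B x + (B q).ker.starProjection) * (B q).ker.starProjection,
    ContDiffAt.clm_comp ?_ contDiffAt_const,
    hunit.mono fun x hx => isProj_ker_of_isUnit_comp_add_starProjection hx⟩
  have hinv := contDiffAt_ringInverse ℝ (n := n) (1 : (E →L[ℝ] E)ˣ)
  rw [Units.val_one, ← hC] at hinv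
  exact hinv.comp q ((contDiffAt_const.clm_comp hB).add contDiffAt_const)

end ConstantRank

/-- `P` is a `C^n` extension, to a neighbourhood of `A`, of the family of orthogonal projections
onto the subspaces `K x`, `x ∈ A`. It gives meaning to full derivatives of this family, which is
itself only defined on the possibly thin set `A`. -/
structure IsProjectionExtension {X E : Type*} [NormedAddCommGroup X] [NormedSpace ℝ X]
    [NormedAddCommGroup E] [InnerProductSpace ℝ E] [FiniteDimensional ℝ E] (n : ℕ) (A : Set X)
    (K : X → Submodule ℝ E) (P : X → E →L[ℝ] E) : Prop where
  contDiffAt : ∀ x ∈ A, ContDiffAt ℝ n P x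
  eq_starProjection : ∀ x ∈ A, P x = (K x).starProjection

namespace IsProjectionExtension

variable {X E : Type*} [NormedAddCommGroup X] [NormedSpace ℝ X] [NormedAddCommGroup E]
  [InnerProductSpace ℝ E] [FiniteDimensional ℝ E] {n : ℕ} {A : Set X} {K : X → Submodule ℝ E}
  {P : X → E →L[ℝ] E} {x : X} {v : E}

theorem exists_of_isProj [FiniteDimensional ℝ X]
    (h : ∀ q ∈ A, ∃ Z : X → E →L[ℝ] E, ContDiffAt ℝ n Z q ∧
      ∀ᶠ x in 𝓝[A] q, LinearMap.IsProj (K x) (Z x)) :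
    ∃ P, IsProjectionExtension n A K P := by
  obtain ⟨P, hPs, hP⟩ := exists_contDiffAt_eqOn_of_local (n := n) (A := A)
    (f := fun x => (K x).starProjection) fun q hq => by
      obtain ⟨Z, hZs, hZ⟩ := h q hq
      exact exists_contDiffAt_eq_starProjection_of_isProj hq hZs hZ
  exact ⟨P, hPs, hP⟩

theorem apply_mem (hP : IsProjectionExtension n A K P) (hx : x ∈ A) (v : E) : P x v ∈ K x :=
  hP.eq_starProjection x hx ▸ Submodule.starProjection_apply_mem _ v

theorem apply_eq_self_iff (hP : IsProjectionExtension n A K P) (hx : x ∈ A) :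
    P x v = v ↔ v ∈ K x := by
  rw [hP.eq_starProjection x hx, Submodule.starProjection_eq_self_iff]

theorem isSelfAdjoint (hP : IsProjectionExtension n A K P) (hx : x ∈ A) :
    IsSelfAdjoint (P x) :=
  hP.eq_starProjection x hx ▸ isSelfAdjoint_starProjection _

theorem isIdempotentElem (hP : IsProjectionExtension n A K P) (hx : x ∈ A) :
    IsIdempotentElem (P x) :=
  hP.eq_starProjection x hx ▸ (K x).isIdempotentElem_starProjection

theorem hasFDerivAt (hP : IsProjectionExtension (n + 1) A K P) (hx : x ∈ A) :
    HasFDerivAt P (fderiv ℝ P x) x :=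
  ((hP.contDiffAt x hx).differentiableAt (by simp)).hasFDerivAt

theorem contDiffAt_fderiv (hP : IsProjectionExtension (n + 1) A K P) (hx : x ∈ A) :
    ContDiffAt ℝ n (fderiv ℝ P) x :=
  (hP.contDiffAt x hx).fderiv_right (by simp)

theorem hasFDerivAt_fderiv (hP : IsProjectionExtension (n + 2) A K P) (hx : x ∈ A) :
    HasFDerivAt (fderiv ℝ P) (fderiv ℝ (fderiv ℝ P) x) x :=
  ((hP.contDiffAt_fderiv hx).differentiableAt (by simp)).hasFDerivAt

theorem isSymmSndFDerivAt (hP : IsProjectionExtension (n + 2) A K P) (hx : x ∈ A) :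
    IsSymmSndFDerivAt ℝ P x :=
  (hP.contDiffAt x hx).isSymmSndFDerivAt (by simp)

end IsProjectionExtension

section Submanifolds

local notation:max "ℝ^" D:max => EuclideanSpace ℝ (Fin D)

variable {D : ℕ} {S : Set ℝ^D} {x v : ℝ^D}

theorem deriv_mem_tangentAt {c : ℝ → ℝ^D} (hc : ContDiff ℝ ∞ c) (hcS : ∀ t, c t ∈ S) (t : ℝ) :
    deriv c t ∈ TangentAt S (c t) :=
  Submodule.subset_span ⟨fun s => c (s + t), hc.comp (by fun_prop), fun s => hcS _, by simp, by
    simp [deriv_comp_add_const]⟩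

theorem apply_eq_of_eventuallyEq_of_mem_tangentAt {F : Type*} [NormedAddCommGroup F]
    [NormedSpace ℝ F] {f g : ℝ^D → F} {f' g' : ℝ^D →L[ℝ] F} (hf : HasFDerivAt f f' x)
    (hg : HasFDerivAt g g' x) (hfg : f =ᶠ[𝓝[S] x] g) (hv : v ∈ TangentAt S x) : f' v = g' v := by
  suffices TangentAt S x ≤ LinearMap.eqLocus f'.toLinearMap g'.toLinearMap from this hv
  refine Submodule.span_le.2 ?_
  rintro _ ⟨c, hc, hcS, rfl, rfl⟩
  have hc0 : HasDerivAt c (deriv c 0) 0 := (hc.differentiable (by simp) 0).hasDerivAt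
  have hcS0 : Filter.Tendsto c (𝓝 0) (𝓝[S] c 0) :=
    tendsto_nhdsWithin_iff.2 ⟨hc.continuous.continuousAt, .of_forall hcS⟩
  exact (hf.comp_hasDerivAt 0 hc0).unique
    ((hg.comp_hasDerivAt 0 hc0).congr_of_eventuallyEq (hcS0.eventually hfg))

/-- `R` is a smooth retraction of the open set `O` of the ambient space onto `S ∩ O`, except that
its values are only required to lie in `S`. -/
structure IsLocalRetraction (S : Set ℝ^D) (R : ℝ^D → ℝ^D) (O : Set ℝ^D) : Prop where
  isOpen : IsOpen O
  contDiffOn : ContDiffOn ℝ ∞ R O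
  mapsTo : MapsTo R O S
  eqOn : EqOn R id (S ∩ O)

theorem IsSubmanifold.exists_isLocalRetraction {m : ℕ} (hS : IsSubmanifold S m) (hx : x ∈ S) :
    ∃ R O, x ∈ O ∧ IsLocalRetraction S R O := by
  obtain ⟨φ, U, hφ⟩ := hS x hx
  obtain ⟨u, hu, rfl⟩ := hφ.mem
  obtain ⟨V, hV, hUV⟩ := hφ.openImage
  obtain ⟨ψ, hψ, hψφ⟩ := hφ.embedding
  have hinj : Function.Injective (fderiv ℝ φ u) := by
    simpa only [fderivWithin_of_isOpen hφ.isOpen hu] using hφ.immersion u hu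
  have hinv : (fderiv ℝ φ u).HasLeftInverse := .of_injective_of_finiteDimensional hinj
  obtain ⟨W, O, G, hW, huW, hO, hφO, hG, hGU, hGφ⟩ :=
    exists_contDiffOn_leftInvOn_of_hasLeftInverse_fderiv (by simp) hφ.isOpen hφ.smooth hu hinv
  obtain ⟨Y, hY, hWY⟩ := continuousOn_iff'.1 hψ W hW
  have hmem : ∀ w ∈ U, w ∈ W ↔ φ w ∈ Y := fun w hw => by
    have h := Set.ext_iff.1 hWY (φ w)
    simpa [mem_image_of_mem φ hw, hψφ w hw] using h
  have hφuV : φ u ∈ S ∩ V := hUV ▸ mem_image_of_mem φ hu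
  refine ⟨φ ∘ G, O ∩ V ∩ Y, ⟨⟨hφO huW, hφuV.2⟩, (hmem u hu).1 huW⟩, (hO.inter hV).inter hY,
    hφ.smooth.comp (hG.mono fun y hy => hy.1.1) fun y hy => hGU hy.1.1, fun y hy => ?_, ?_⟩
  · exact (hUV ▸ mem_image_of_mem φ (hGU hy.1.1) : φ (G y) ∈ S ∩ V).1
  · rintro y ⟨hyS, ⟨-, hyV⟩, hyY⟩
    obtain ⟨w, hw, rfl⟩ : y ∈ φ '' U := hUV ▸ ⟨hyS, hyV⟩
    exact congrArg φ (hGφ ((hmem w hw).2 hyY))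

namespace IsLocalRetraction

variable {R : ℝ^D → ℝ^D} {O : Set ℝ^D}

theorem contDiffAt (hR : IsLocalRetraction S R O) (hx : x ∈ O) : ContDiffAt ℝ ∞ R x :=
  hR.contDiffOn.contDiffAt (hR.isOpen.mem_nhds hx)

theorem hasFDerivAt (hR : IsLocalRetraction S R O) (hx : x ∈ O) :
    HasFDerivAt R (fderiv ℝ R x) x :=
  ((hR.contDiffAt hx).differentiableAt (by simp)).hasFDerivAt

theorem exists_curve (hR : IsLocalRetraction S R O) (hx : x ∈ S ∩ O) (v : ℝ^D) :
    ∃ c : ℝ → ℝ^D, ContDiff ℝ ∞ c ∧ (∀ t, c t ∈ S) ∧ c 0 = x ∧ HasDerivAt c (fderiv ℝ R x v) 0 := by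
  obtain ⟨c, hc, hcO, rfl, hcv⟩ := exists_contDiff_curve_forall_mem_of_isOpen hR.isOpen hx.2 v
  exact ⟨R ∘ c, hR.contDiffOn.comp_contDiff hc hcO, fun t => hR.mapsTo (hcO t), hR.eqOn hx,
    (hR.hasFDerivAt hx.2).comp_hasDerivAt 0 hcv⟩

theorem isProj_fderiv (hR : IsLocalRetraction S R O) (hx : x ∈ S ∩ O) :
    LinearMap.IsProj (TangentAt S x) (fderiv ℝ R x) where
  map_mem v := by
    obtain ⟨c, hc, hcS, hc0, hcv⟩ := hR.exists_curve hx v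
    exact Submodule.subset_span ⟨c, hc, hcS, hc0, hcv.deriv⟩
  map_id v hv :=
    apply_eq_of_eventuallyEq_of_mem_tangentAt (hR.hasFDerivAt hx.2) (hasFDerivAt_id x)
      (hR.eqOn.eventuallyEq_of_mem (inter_mem_nhdsWithin S (hR.isOpen.mem_nhds hx.2))) hv

end IsLocalRetraction

theorem IsSubmanifold.exists_curve {m : ℕ} (hS : IsSubmanifold S m) (hx : x ∈ S)
    (hv : v ∈ TangentAt S x) :
    ∃ c : ℝ → ℝ^D, ContDiff ℝ ∞ c ∧ (∀ t, c t ∈ S) ∧ c 0 = x ∧ HasDerivAt c v 0 := by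
  obtain ⟨R, O, hxO, hR⟩ := hS.exists_isLocalRetraction hx
  have hcurve := hR.exists_curve ⟨hx, hxO⟩ v
  rwa [(hR.isProj_fderiv ⟨hx, hxO⟩).map_id v hv] at hcurve

theorem IsSubmanifold.exists_isProjectionExtension {m : ℕ} (hS : IsSubmanifold S m) (n : ℕ) :
    ∃ P, IsProjectionExtension n S (TangentAt S) P :=
  IsProjectionExtension.exists_of_isProj fun x hx => by
    obtain ⟨R, O, hxO, hR⟩ := hS.exists_isLocalRetraction hx
    refine ⟨fderiv ℝ R, (hR.contDiffAt hxO).fderiv_right (by exact_mod_cast le_top), ?_⟩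
    filter_upwards [inter_mem_nhdsWithin S (hR.isOpen.mem_nhds hxO)] with y hy
    exact hR.isProj_fderiv hy

namespace IsProjectionExtension

variable {E : Type*} [NormedAddCommGroup E] [InnerProductSpace ℝ E] [FiniteDimensional ℝ E]
  {n : ℕ} {A : Set ℝ^D} {K : ℝ^D → Submodule ℝ E} {P : ℝ^D → E →L[ℝ] E}

theorem apply_fderiv_add_fderiv_apply (hP : IsProjectionExtension (n + 1) A K P) (hx : x ∈ A)
    (hA : A ∈ 𝓝[S] x) (hv : v ∈ TangentAt S x) {f : ℝ^D → E} {f' : ℝ^D →L[ℝ] E}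
    (hf : HasFDerivAt f f' x) (hfK : ∀ᶠ y in 𝓝[S] x, f y ∈ K y) :
    P x (f' v) + fderiv ℝ P x v (f x) = f' v := by
  have hPf : (fun y => P y (f y)) =ᶠ[𝓝[S] x] f := by
    filter_upwards [hA, hfK] with y hy hfy using (hP.apply_eq_self_iff hy).2 hfy
  simpa using
    apply_eq_of_eventuallyEq_of_mem_tangentAt ((hP.hasFDerivAt hx).clm_apply hf) hf hPf hv

theorem fderiv_apply_eq_zero_of_mem (hP : IsProjectionExtension (n + 1) A K P) (hx : x ∈ A)
    (hA : A ∈ 𝓝[S] x) (hv : v ∈ TangentAt S x) {w : E} (hw : w ∈ K x)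
    (hvw : fderiv ℝ P x v w ∈ K x) : fderiv ℝ P x v w = 0 := by
  have hPw : ∀ᶠ y in 𝓝[S] x, P y w ∈ K y := by
    filter_upwards [hA] with y hy using hP.apply_mem hy w
  have h := hP.apply_fderiv_add_fderiv_apply hx hA hv
    ((hP.hasFDerivAt hx).clm_apply (hasFDerivAt_const w x)) hPw
  simpa [(hP.apply_eq_self_iff hx).2 hw, (hP.apply_eq_self_iff hx).2 hvw] using h

theorem fderiv_eq_zero_of_forall_mem (hP : IsProjectionExtension (n + 1) A K P) (hx : x ∈ A)
    (hA : A ∈ 𝓝[S] x) (hv : v ∈ TangentAt S x) (h : ∀ w ∈ K x, fderiv ℝ P x v w = 0) :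
    fderiv ℝ P x v = 0 := by
  have hPd := hP.hasFDerivAt hx
  have hstar : (fun y => star (P y)) =ᶠ[𝓝[S] x] P := by
    filter_upwards [hA] with y hy using (hP.isSelfAdjoint hy).star_eq
  have hmul : P * P =ᶠ[𝓝[S] x] P := by
    filter_upwards [hA] with y hy using hP.isIdempotentElem hy
  have hself : IsSelfAdjoint (fderiv ℝ P x v) := by
    simpa [isSelfAdjoint_iff] using
      apply_eq_of_eventuallyEq_of_mem_tangentAt hPd.star hPd hstar hv
  have hadd : P x * fderiv ℝ P x v + fderiv ℝ P x v * P x = fderiv ℝ P x v := by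
    simpa using apply_eq_of_eventuallyEq_of_mem_tangentAt (hPd.mul' hPd) hPd hmul hv
  exact eq_zero_of_isSelfAdjoint_of_mul_add_mul_eq hself (hP.isSelfAdjoint hx) hadd
    (ContinuousLinearMap.ext fun w => h _ (hP.apply_mem hx w))

end IsProjectionExtension

section SecondFundamentalForm

variable {m n : ℕ} {P : ℝ^D → ℝ^D →L[ℝ] ℝ^D} {w : ℝ^D}

theorem IsProjectionExtension.fderiv_apply_comm
    (hP : IsProjectionExtension (n + 1) S (TangentAt S) P) (hS : IsSubmanifold S m) (hx : x ∈ S)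
    (hv : v ∈ TangentAt S x) (hw : w ∈ TangentAt S x) :
    fderiv ℝ P x v w = fderiv ℝ P x w v := by
  obtain ⟨R, O, hxO, hR⟩ := hS.exists_isLocalRetraction hx
  have hR2 : HasFDerivAt (fderiv ℝ R) (fderiv ℝ (fderiv ℝ R) x) x :=
    (((hR.contDiffAt hxO).fderiv_right (m := 1) (by norm_cast)).differentiableAt
      (by simp)).hasFDerivAt
  have hsymm : IsSymmSndFDerivAt ℝ R x :=
    (hR.contDiffAt hxO).isSymmSndFDerivAt (by simp; norm_cast)
  have key : ∀ v ∈ TangentAt S x, ∀ w ∈ TangentAt S x,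
      P x (fderiv ℝ (fderiv ℝ R) x v w) + fderiv ℝ P x v w = fderiv ℝ (fderiv ℝ R) x v w := by
    intro v hv w hw
    have hRw : ∀ᶠ y in 𝓝[S] x, fderiv ℝ R y w ∈ TangentAt S y := by
      filter_upwards [inter_mem_nhdsWithin S (hR.isOpen.mem_nhds hxO)] with y hy
      exact (hR.isProj_fderiv hy).map_mem w
    have h := hP.apply_fderiv_add_fderiv_apply hx self_mem_nhdsWithin hv
      (hR2.clm_apply (hasFDerivAt_const w x)) hRw
    have hw' : fderiv ℝ R x w = w := (hR.isProj_fderiv ⟨hx, hxO⟩).map_id w hw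
    simpa [hw'] using h
  have hwv := key w hw v hv
  rw [hsymm.eq w v] at hwv
  exact add_left_cancel ((key v hv w hw).trans hwv.symm)

theorem IsSubmanifold.contDiff_starProjection_tangentAt (hS : IsSubmanifold S m) {c : ℝ → ℝ^D}
    (hc : ContDiff ℝ ∞ c) (hcS : ∀ t, c t ∈ S) :
    ContDiff ℝ ∞ fun t => (TangentAt S (c t)).starProjection := by
  refine contDiff_infty.2 fun n => ?_
  obtain ⟨P, hP⟩ := hS.exists_isProjectionExtension n
  have hPc : (fun t => (TangentAt S (c t)).starProjection) = P ∘ c :=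
    funext fun t => (hP.eq_starProjection _ (hcS t)).symm
  rw [hPc]
  exact contDiff_iff_contDiffAt.2 fun t =>
    (hP.contDiffAt _ (hcS t)).comp t (hc.contDiffAt.of_le (by exact_mod_cast le_top))

theorem fderiv_tangentProj_eq_zero_of_mem_nullityAt (hS : IsSubmanifold S m)
    (hP : IsProjectionExtension (n + 1) S (TangentAt S) P) (hx : x ∈ S)
    (hv : v ∈ nullityAt .euclidean S x) : fderiv ℝ P x v = 0 := by
  refine hP.fderiv_eq_zero_of_forall_mem hx self_mem_nhdsWithin hv.1 fun w hw =>
    hP.fderiv_apply_eq_zero_of_mem hx self_mem_nhdsWithin hv.1 hw ?_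
  obtain ⟨c, hc, hcS, rfl, hcv⟩ := hS.exists_curve hx hv.1
  have hW := hv.2 c (fun t => (TangentAt S (c t)).starProjection w) hc hcS rfl hcv.deriv
    ((hS.contDiff_starProjection_tangentAt hc hcS).clm_apply contDiff_const)
    fun t => Submodule.starProjection_apply_mem _ w
  have hPc : HasDerivAt (fun t => (TangentAt S (c t)).starProjection w)
      (fderiv ℝ P (c 0) v w) 0 := by
    simpa [hP.eq_starProjection _ (hcS _)] using
      ((hP.hasFDerivAt hx).comp_hasDerivAt 0 hcv).clm_apply (hasDerivAt_const 0 w)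
  simpa [radialAt, hPc.deriv] using hW

theorem mem_nullityAt_of_fderiv_eq_zero (hP : IsProjectionExtension (n + 1) S (TangentAt S) P)
    (hx : x ∈ S) (hv : v ∈ TangentAt S x) (h : fderiv ℝ P x v = 0) :
    v ∈ nullityAt .euclidean S x := by
  refine ⟨hv, fun c W hc hcS hc0 hcv hW hWT => ?_⟩
  subst hc0 hcv
  have hc' : HasDerivAt c (deriv c 0) 0 := (hc.differentiable (by simp) 0).hasDerivAt
  have hW' : HasDerivAt W (deriv W 0) 0 := (hW.differentiable (by simp) 0).hasDerivAt
  have hPW : ∀ t, P (c t) (W t) = W t := fun t => (hP.apply_eq_self_iff (hcS t)).2 (hWT t)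
  have hPW' := ((hP.hasFDerivAt hx).comp_hasDerivAt 0 hc').clm_apply hW'
  have hfix : P (c 0) (deriv W 0) = deriv W 0 := by
    simpa [h] using hPW'.unique (hW'.congr_of_eventuallyEq (.of_forall hPW))
  simpa [radialAt] using (hP.apply_eq_self_iff hx).1 hfix

/-- The nullity space of the second fundamental form of `S ⊆ ℝ^D` at `x`, as a subspace. That the
span adds nothing to `nullityAt` on submanifolds is `mem_nullitySubmodule_iff_mem_nullityAt`. -/
def nullitySubmodule (S : Set ℝ^D) (x : ℝ^D) : Submodule ℝ ℝ^D :=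
  Submodule.span ℝ (nullityAt .euclidean S x)

theorem nullitySubmodule_le_tangentAt : nullitySubmodule S x ≤ TangentAt S x :=
  Submodule.span_le.2 fun _ hv => hv.1

theorem mem_nullitySubmodule_iff (hS : IsSubmanifold S m)
    (hP : IsProjectionExtension (n + 1) S (TangentAt S) P) (hx : x ∈ S) :
    v ∈ nullitySubmodule S x ↔ v ∈ TangentAt S x ∧ fderiv ℝ P x v = 0 := by
  refine ⟨fun hv => ⟨nullitySubmodule_le_tangentAt hv, ?_⟩,
    fun hv => Submodule.subset_span (mem_nullityAt_of_fderiv_eq_zero hP hx hv.1 hv.2)⟩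
  have hle : nullitySubmodule S x ≤ (fderiv ℝ P x).ker :=
    Submodule.span_le.2 fun w hw => fderiv_tangentProj_eq_zero_of_mem_nullityAt hS hP hx hw
  exact hle hv

theorem mem_nullitySubmodule_iff_mem_nullityAt (hS : IsSubmanifold S m) (hx : x ∈ S) :
    v ∈ nullitySubmodule S x ↔ v ∈ nullityAt .euclidean S x := by
  obtain ⟨P, hP⟩ := hS.exists_isProjectionExtension 1
  refine ⟨fun hv => ?_, fun hv => Submodule.subset_span hv⟩
  obtain ⟨hvT, hv0⟩ := (mem_nullitySubmodule_iff hS hP hx).1 hv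
  exact mem_nullityAt_of_fderiv_eq_zero hP hx hvT hv0

end SecondFundamentalForm

section NullityDistribution

variable {m n k : ℕ} {P N : ℝ^D → ℝ^D →L[ℝ] ℝ^D} {w y : ℝ^D}

theorem nullitySubmodule_eq_ker_prod (hS : IsSubmanifold S m)
    (hP : IsProjectionExtension (n + 1) S (TangentAt S) P) (hx : x ∈ S) :
    nullitySubmodule S x = ((1 - P x).prod (fderiv ℝ P x)).ker := by
  ext v
  rw [mem_nullitySubmodule_iff hS hP hx, ← hP.apply_eq_self_iff hx]
  simp [sub_eq_zero, eq_comm (a := v)]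

theorem IsProjectionExtension.contDiffAt_one_sub_prod_fderiv
    (hP : IsProjectionExtension (n + 1) S (TangentAt S) P) (hx : x ∈ S) :
    ContDiffAt ℝ n (fun y => (1 - P y).prod (fderiv ℝ P y)) x :=
  contDiffAt_clm_prod (contDiffAt_const.sub ((hP.contDiffAt x hx).of_le (by simp)))
    (hP.contDiffAt_fderiv hx)

theorem minNullitySet_mem_nhdsWithin (hS : IsSubmanifold S m)
    (hx : x ∈ minNullitySet .euclidean S) : minNullitySet .euclidean S ∈ 𝓝[S] x := by
  obtain ⟨P, hP⟩ := hS.exists_isProjectionExtension 1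
  filter_upwards [self_mem_nhdsWithin, nhdsWithin_le_nhds (eventually_finrank_ker_le
    (hP.contDiffAt_one_sub_prod_fderiv (n := 0) hx.1).continuousAt)] with y hyS hy
  rw [← nullitySubmodule_eq_ker_prod hS hP hx.1, ← nullitySubmodule_eq_ker_prod hS hP hyS] at hy
  exact ⟨hyS, fun r hr => hy.trans (hx.2 r hr)⟩

theorem IsSubmanifold.exists_isProjectionExtension_nullitySubmodule (hS : IsSubmanifold S m)
    (n : ℕ) :
    ∃ N, IsProjectionExtension n (minNullitySet .euclidean S) (nullitySubmodule S) N := by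
  obtain ⟨P, hP⟩ := hS.exists_isProjectionExtension (n + 1)
  refine IsProjectionExtension.exists_of_isProj fun x hx => ?_
  obtain ⟨Z, hZ, hproj⟩ := exists_contDiffAt_isProj_ker (hP.contDiffAt_one_sub_prod_fderiv hx.1)
  refine ⟨Z, hZ, ?_⟩
  filter_upwards [self_mem_nhdsWithin, nhdsWithin_le_nhds hproj] with y hy hproj
  rw [← nullitySubmodule_eq_ker_prod hS hP hx.1, ← nullitySubmodule_eq_ker_prod hS hP hy.1] at hproj
  exact hproj (le_antisymm (hy.2 x hx.1) (hx.2 y hy.1))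

theorem fderiv_fderiv_apply_comm_of_mem_nullitySubmodule (hS : IsSubmanifold S m)
    (hP : IsProjectionExtension (n + 2) S (TangentAt S) P) (hx : x ∈ S)
    (hy : y ∈ nullitySubmodule S x) (hv : v ∈ TangentAt S x) (hw : w ∈ TangentAt S x) :
    fderiv ℝ (fderiv ℝ P) x y v w = fderiv ℝ (fderiv ℝ P) x y w v := by
  obtain ⟨hyT, hy0⟩ := (mem_nullitySubmodule_iff hS hP hx).1 hy
  have hPc : ∀ a, HasFDerivAt (fun z => P z a) ((fderiv ℝ P x).flip a) x := fun a => by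
    simpa using (hP.hasFDerivAt hx).clm_apply (hasFDerivAt_const a x)
  have hPP : ∀ a b, HasFDerivAt (fun z => fderiv ℝ P z (P z a) (P z b)) _ x := fun a b =>
    ((hP.hasFDerivAt_fderiv hx).clm_apply (hPc a)).clm_apply (hPc b)
  have hcomm : (fun z => fderiv ℝ P z (P z v) (P z w)) =ᶠ[𝓝[S] x]
      fun z => fderiv ℝ P z (P z w) (P z v) := by
    filter_upwards [self_mem_nhdsWithin] with z hz
    exact hP.fderiv_apply_comm hS hz (hP.apply_mem hz v) (hP.apply_mem hz w)
  simpa [hy0, (hP.apply_eq_self_iff hx).2 hv, (hP.apply_eq_self_iff hx).2 hw] using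
    apply_eq_of_eventuallyEq_of_mem_tangentAt (hPP v w) (hPP w v) hcomm hyT

theorem fderiv_nullityProj_apply_mem_tangentAt (hS : IsSubmanifold S m)
    (hN : IsProjectionExtension (k + 1) (minNullitySet .euclidean S) (nullitySubmodule S) N)
    (hx : x ∈ minNullitySet .euclidean S) (hw : w ∈ TangentAt S x)
    (hy : y ∈ nullitySubmodule S x) : fderiv ℝ N x w y ∈ TangentAt S x := by
  obtain ⟨P, hP⟩ := hS.exists_isProjectionExtension 1
  obtain ⟨hyT, hy0⟩ := (mem_nullitySubmodule_iff hS hP hx.1).1 hy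
  have hNy : ∀ᶠ z in 𝓝[S] x, N z y ∈ TangentAt S z := by
    filter_upwards [minNullitySet_mem_nhdsWithin hS hx] with z hz
    exact nullitySubmodule_le_tangentAt (hN.apply_mem hz y)
  have h := hP.apply_fderiv_add_fderiv_apply hx.1 self_mem_nhdsWithin hw
    ((hN.hasFDerivAt hx).clm_apply (hasFDerivAt_const y x)) hNy
  rw [← hP.apply_eq_self_iff hx.1]
  simpa [(hN.apply_eq_self_iff hx).2 hy, hP.fderiv_apply_comm hS hx.1 hw hyT, hy0] using h

theorem fderiv_apply_fderiv_nullityProj_apply {F : Type*} [NormedAddCommGroup F] [NormedSpace ℝ F]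
    (hS : IsSubmanifold S m)
    (hN : IsProjectionExtension (k + 1) (minNullitySet .euclidean S) (nullitySubmodule S) N)
    (hx : x ∈ minNullitySet .euclidean S) (hw : w ∈ TangentAt S x)
    (hy : y ∈ nullitySubmodule S x) {Q : ℝ^D → F} {H : ℝ^D →L[ℝ] ℝ^D →L[ℝ] F}
    (hQ : HasFDerivAt (fderiv ℝ Q) H x)
    (h : ∀ z ∈ minNullitySet .euclidean S, ∀ u ∈ nullitySubmodule S z, fderiv ℝ Q z u = 0) :
    fderiv ℝ Q x (fderiv ℝ N x w y) = -H w y := by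
  have hQN : (fun z => fderiv ℝ Q z (N z y)) =ᶠ[𝓝[S] x] fun _ => 0 := by
    filter_upwards [minNullitySet_mem_nhdsWithin hS hx] with z hz
    exact h z hz _ (hN.apply_mem hz y)
  have hderiv := apply_eq_of_eventuallyEq_of_mem_tangentAt (hQ.clm_apply
    ((hN.hasFDerivAt hx).clm_apply (hasFDerivAt_const y x))) (hasFDerivAt_const 0 x) hQN hw
  exact eq_neg_of_add_eq_zero_left (by simpa [(hN.apply_eq_self_iff hx).2 hy] using hderiv)

theorem fderiv_nullityProj_apply_mem_nullitySubmodule (hS : IsSubmanifold S m)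
    (hN : IsProjectionExtension (k + 1) (minNullitySet .euclidean S) (nullitySubmodule S) N)
    (hx : x ∈ minNullitySet .euclidean S) (hv : v ∈ nullitySubmodule S x)
    (hy : y ∈ nullitySubmodule S x) : fderiv ℝ N x v y ∈ nullitySubmodule S x := by
  obtain ⟨P, hP⟩ := hS.exists_isProjectionExtension 2
  obtain ⟨hvT, hv0⟩ := (mem_nullitySubmodule_iff hS hP hx.1).1 hv
  have hNT : ∀ a ∈ TangentAt S x, fderiv ℝ N x a y ∈ TangentAt S x := fun a ha =>
    fderiv_nullityProj_apply_mem_tangentAt hS hN hx ha hy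
  refine (mem_nullitySubmodule_iff hS hP hx.1).2 ⟨hNT v hvT, ?_⟩
  refine hP.fderiv_eq_zero_of_forall_mem hx.1 self_mem_nhdsWithin (hNT v hvT) fun w hw => ?_
  have hsymm := hP.isSymmSndFDerivAt hx.1
  have hPN : ∀ a ∈ TangentAt S x,
      fderiv ℝ P x (fderiv ℝ N x a y) = -fderiv ℝ (fderiv ℝ P) x a y := fun a ha =>
    fderiv_apply_fderiv_nullityProj_apply hS hN hx ha hy (hP.hasFDerivAt_fderiv hx.1)
      fun z hz u hu => ((mem_nullitySubmodule_iff hS hP hz.1).1 hu).2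
  calc fderiv ℝ P x (fderiv ℝ N x v y) w
      = -fderiv ℝ (fderiv ℝ P) x y v w := by
        rw [hPN v hvT, hsymm.eq v y]; rfl
    _ = -fderiv ℝ (fderiv ℝ P) x w y v := by
        rw [fderiv_fderiv_apply_comm_of_mem_nullitySubmodule hS hP hx.1 hy hvT hw, hsymm.eq y w]
    _ = fderiv ℝ P x (fderiv ℝ N x w y) v := by
        rw [hPN w hw]; rfl
    _ = 0 := by
        rw [hP.fderiv_apply_comm hS hx.1 (hNT w hw) hvT, hv0]
        rfl

theorem fderiv_nullityProj_eq_zero_of_mem (hS : IsSubmanifold S m)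
    (hN : IsProjectionExtension (k + 1) (minNullitySet .euclidean S) (nullitySubmodule S) N)
    (hx : x ∈ minNullitySet .euclidean S) (hv : v ∈ nullitySubmodule S x) :
    fderiv ℝ N x v = 0 :=
  have hA := minNullitySet_mem_nhdsWithin hS hx
  have hvT := nullitySubmodule_le_tangentAt hv
  hN.fderiv_eq_zero_of_forall_mem hx hA hvT fun _ hy =>
    hN.fderiv_apply_eq_zero_of_mem hx hA hvT hy
      (fderiv_nullityProj_apply_mem_nullitySubmodule hS hN hx hv hy)

end NullityDistribution

section NullitySegments

variable {m n k : ℕ} {P N : ℝ^D → ℝ^D →L[ℝ] ℝ^D} {p w : ℝ^D} {b t : ℝ}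

/-- The segment `{p + t • v | 0 ≤ t < b}` consists of points of minimal nullity index and is tangent
to the nullity distribution, and its end point `p + b • v` still lies in `S`. This is what
completeness provides up to the first time at which a nullity line could leave the set of points of
minimal nullity index. -/
structure IsNullitySegment (S : Set ℝ^D) (p v : ℝ^D) (b : ℝ) : Prop where
  pos : 0 < b
  mem_minNullitySet : ∀ t ∈ Ico 0 b, p + t • v ∈ minNullitySet .euclidean S
  mem_nullitySubmodule : ∀ t ∈ Ico 0 b, v ∈ nullitySubmodule S (p + t • v)
  endpoint_mem : p + b • v ∈ S

namespace IsNullitySegment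

theorem start_mem (h : IsNullitySegment S p v b) : p ∈ minNullitySet .euclidean S := by
  simpa using h.mem_minNullitySet 0 ⟨le_rfl, h.pos⟩

theorem mem_nullitySubmodule_start (h : IsNullitySegment S p v b) : v ∈ nullitySubmodule S p := by
  simpa using h.mem_nullitySubmodule 0 ⟨le_rfl, h.pos⟩

theorem mem (h : IsNullitySegment S p v b) (ht : t ∈ Icc 0 b) : p + t • v ∈ S := by
  rcases ht.2.eq_or_lt with rfl | htb
  · exact h.endpoint_mem
  · exact (h.mem_minNullitySet t ⟨ht.1, htb⟩).1

theorem tangentAt_eq (h : IsNullitySegment S p v b) (hS : IsSubmanifold S m) (ht : t ∈ Icc 0 b) :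
    TangentAt S (p + t • v) = TangentAt S p := by
  obtain ⟨P, hP⟩ := hS.exists_isProjectionExtension 1
  have hderiv : ∀ s ∈ Icc 0 b, HasDerivAt (fun r : ℝ => P (p + r • v))
      (fderiv ℝ P (p + s • v) v) s := fun s hs =>
    (hP.hasFDerivAt (h.mem hs)).comp_hasDerivAt s (hasDerivAt_add_smul_const p v s)
  have hconst := constant_of_has_deriv_right_zero
    (fun s hs => (hderiv s hs).continuousAt.continuousWithinAt) (fun s hs => by
      have hv0 := ((mem_nullitySubmodule_iff hS hP (h.mem_minNullitySet s hs).1).1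
        (h.mem_nullitySubmodule s hs)).2
      exact hv0 ▸ (hderiv s (Ico_subset_Icc_self hs)).hasDerivWithinAt) t ht
  simpa [hP.eq_starProjection _ (h.mem ht), hP.eq_starProjection p h.start_mem.1,
    Submodule.starProjection_inj] using hconst

/-- The vectors `w + t • K`, where `K` is the derivative of the nullity direction `v` along `w`, are
the variation field of the family of nullity lines with initial points moving along `w`. -/
theorem add_smul_mem_tangentAt (h : IsNullitySegment S p v b) (hS : IsSubmanifold S m)
    (hN : IsProjectionExtension (k + 1) (minNullitySet .euclidean S) (nullitySubmodule S) N)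
    (hw : w ∈ TangentAt S p) (ht : t ∈ Icc 0 b) :
    w + t • fderiv ℝ N p w v ∈ TangentAt S (p + t • v) :=
  h.tangentAt_eq hS ht ▸ add_mem hw (Submodule.smul_mem _ t
    (fderiv_nullityProj_apply_mem_tangentAt hS hN h.start_mem hw h.mem_nullitySubmodule_start))

theorem hasDerivAt_fderiv_apply {F : Type*} [NormedAddCommGroup F] [NormedSpace ℝ F]
    (h : IsNullitySegment S p v b) (hS : IsSubmanifold S m)
    (hN : IsProjectionExtension (k + 1) (minNullitySet .euclidean S) (nullitySubmodule S) N)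
    (hw : w ∈ TangentAt S p) (ht : t ∈ Ico 0 b) {Q : ℝ^D → F}
    (hQ : HasFDerivAt (fderiv ℝ Q) (fderiv ℝ (fderiv ℝ Q) (p + t • v)) (p + t • v))
    (hsymm : IsSymmSndFDerivAt ℝ Q (p + t • v))
    (hQN : ∀ z ∈ minNullitySet .euclidean S, ∀ u ∈ nullitySubmodule S z, fderiv ℝ Q z u = 0) :
    HasDerivAt (fun s : ℝ => fderiv ℝ Q (p + s • v) (w + s • fderiv ℝ N p w v))
      (fderiv ℝ Q (p + t • v) (fderiv ℝ N p w v -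
        fderiv ℝ N (p + t • v) (w + t • fderiv ℝ N p w v) v)) t := by
  have hW := h.add_smul_mem_tangentAt hS hN hw (Ico_subset_Icc_self ht)
  have hQv := fderiv_apply_fderiv_nullityProj_apply hS hN (h.mem_minNullitySet t ht) hW
    (h.mem_nullitySubmodule t ht) hQ hQN
  rw [map_sub, hQv, hsymm.eq, sub_neg_eq_add, add_comm]
  exact hasDerivAt_clm_apply_add_smul_const hQ w _

theorem fderiv_nullityProj_apply_add_smul (h : IsNullitySegment S p v b) (hS : IsSubmanifold S m)
    (hN : IsProjectionExtension (k + 2) (minNullitySet .euclidean S) (nullitySubmodule S) N)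
    (hw : w ∈ TangentAt S p) (ht : t ∈ Ico 0 b) :
    fderiv ℝ N (p + t • v) (w + t • fderiv ℝ N p w v) v = fderiv ℝ N p w v := by
  set K := fderiv ℝ N p w v
  have hst : ∀ s ∈ Icc 0 t, s ∈ Ico 0 b := fun s hs => ⟨hs.1, hs.2.trans_lt ht.2⟩
  have hdN : ∀ s ∈ Icc 0 t, ContinuousAt (fun r : ℝ => fderiv ℝ N (p + r • v)) s := fun s hs =>
    ((hN.contDiffAt_fderiv (h.mem_minNullitySet s (hst s hs))).continuousAt).comp
      (f := fun r : ℝ => p + r • v) (hasDerivAt_add_smul_const p v s).continuousAt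
  have hode : ∀ s ∈ Icc 0 t, HasDerivAt
      (fun r : ℝ => fderiv ℝ N (p + r • v) (w + r • K) v - K)
      ((-(ContinuousLinearMap.apply ℝ ℝ^D v ∘L fderiv ℝ N (p + s • v)))
        (fderiv ℝ N (p + s • v) (w + s • K) v - K)) s := by
    intro s hs
    have hA := h.mem_minNullitySet s (hst s hs)
    have hderiv := ((h.hasDerivAt_fderiv_apply hS hN hw (hst s hs) (hN.hasFDerivAt_fderiv hA)
      (hN.isSymmSndFDerivAt hA) fun z hz u hu =>
        fderiv_nullityProj_eq_zero_of_mem hS hN hz hu).clm_apply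
      (hasDerivAt_const s v)).sub_const K
    simpa [K] using hderiv
  refine sub_eq_zero.1 (eq_zero_of_hasDerivAt_clm_apply
    (L := fun s => -(ContinuousLinearMap.apply ℝ ℝ^D v ∘L fderiv ℝ N (p + s • v)))
    (fun s hs => ?_) hode (by simp [K]) t ⟨ht.1, le_rfl⟩)
  have hcont := (hdN s hs).continuousWithinAt (s := Icc 0 t)
  fun_prop

theorem fderiv_tangentProj_apply_add_smul (h : IsNullitySegment S p v b) (hS : IsSubmanifold S m)
    (hP : IsProjectionExtension (n + 2) S (TangentAt S) P)
    (hN : IsProjectionExtension (k + 2) (minNullitySet .euclidean S) (nullitySubmodule S) N)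
    (hw : w ∈ TangentAt S p) :
    fderiv ℝ P (p + b • v) (w + b • fderiv ℝ N p w v) = fderiv ℝ P p w := by
  have hcont : ∀ s ∈ Icc 0 b, ContinuousWithinAt
      (fun r : ℝ => fderiv ℝ P (p + r • v) (w + r • fderiv ℝ N p w v)) (Icc 0 b) s :=
    fun s hs => (hasDerivAt_clm_apply_add_smul_const (hP.hasFDerivAt_fderiv (h.mem hs))
      w _).continuousAt.continuousWithinAt
  have hderiv : ∀ s ∈ Ico 0 b, HasDerivWithinAt
      (fun r : ℝ => fderiv ℝ P (p + r • v) (w + r • fderiv ℝ N p w v)) 0 (Ici s) s := by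
    intro s hs
    have hxS := h.mem (Ico_subset_Icc_self hs)
    have hd := h.hasDerivAt_fderiv_apply hS hN hw hs (hP.hasFDerivAt_fderiv hxS)
      (hP.isSymmSndFDerivAt hxS) fun z hz u hu => ((mem_nullitySubmodule_iff hS hP hz.1).1 hu).2
    rw [h.fderiv_nullityProj_apply_add_smul hS hN hw hs, sub_self, map_zero] at hd
    exact hd.hasDerivWithinAt
  simpa using constant_of_has_deriv_right_zero hcont hderiv b ⟨h.pos.le, le_rfl⟩

theorem endpoint_mem_minNullitySet (h : IsNullitySegment S p v b) (hS : IsSubmanifold S m) :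
    p + b • v ∈ minNullitySet .euclidean S := by
  obtain ⟨P, hP⟩ := hS.exists_isProjectionExtension 2
  obtain ⟨N, hN⟩ := hS.exists_isProjectionExtension_nullitySubmodule 2
  have hb : b ∈ Icc 0 b := ⟨h.pos.le, le_rfl⟩
  have hker : ∀ z ∈ S, nullitySubmodule S z = TangentAt S z ⊓ (fderiv ℝ P z).toLinearMap.ker :=
    fun z hz => Submodule.ext fun u => mem_nullitySubmodule_iff hS hP hz
  have hmap : (TangentAt S p).map (fderiv ℝ P p).toLinearMap ≤
      (TangentAt S p).map (fderiv ℝ P (p + b • v)).toLinearMap := by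
    rintro _ ⟨w, hw, rfl⟩
    exact ⟨w + b • fderiv ℝ N p w v,
      h.tangentAt_eq hS hb ▸ h.add_smul_mem_tangentAt hS hN hw hb,
      h.fderiv_tangentProj_apply_add_smul hS hP hN hw⟩
  have hle := finrank_inf_ker_le_of_map_le_map hmap
  rw [← hker p h.start_mem.1, ← h.tangentAt_eq hS hb, ← hker _ h.endpoint_mem] at hle
  exact ⟨h.endpoint_mem, fun r hr => hle.trans (h.start_mem.2 r hr)⟩

end IsNullitySegment

end NullitySegments

section Geodesics

variable {m n k : ℕ} {P N : ℝ^D → ℝ^D →L[ℝ] ℝ^D} {γ c : ℝ → ℝ^D} {p : ℝ^D} {b t : ℝ}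

theorem aForm_euclidean (y z : ℝ^D) : aForm .euclidean y z = inner ℝ y z := by
  simp [aForm, formSign, PiLp.inner_apply, mul_comm]

namespace IsGeodesicOn

theorem hasDerivAt (hγ : IsGeodesicOn .euclidean S γ) (t : ℝ) : HasDerivAt γ (deriv γ t) t :=
  (hγ.smooth.differentiable (by simp) t).hasDerivAt

theorem contDiff_deriv (hγ : IsGeodesicOn .euclidean S γ) : ContDiff ℝ ∞ (deriv γ) :=
  (contDiff_infty_iff_deriv.1 hγ.smooth).2

theorem hasDerivAt_deriv (hγ : IsGeodesicOn .euclidean S γ) (t : ℝ) :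
    HasDerivAt (deriv γ) (deriv (deriv γ) t) t :=
  (hγ.contDiff_deriv.differentiable (by simp) t).hasDerivAt

theorem deriv_deriv (hγ : IsGeodesicOn .euclidean S γ)
    (hP : IsProjectionExtension (n + 1) S (TangentAt S) P) (t : ℝ) :
    deriv (deriv γ) t = fderiv ℝ P (γ t) (deriv γ t) (deriv γ t) := by
  have hnormal : P (γ t) (deriv (deriv γ) t) = 0 := by
    rw [hP.eq_starProjection _ (hγ.mem t), Submodule.starProjection_apply_eq_zero_iff,
      Submodule.mem_orthogonal']
    exact fun v hv => aForm_euclidean _ v ▸ hγ.accel_normal t v hv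
  have hfix : ∀ s, P (γ s) (deriv γ s) = deriv γ s := fun s =>
    (hP.apply_eq_self_iff (hγ.mem s)).2 (deriv_mem_tangentAt hγ.smooth hγ.mem s)
  have hderiv := ((hP.hasFDerivAt (hγ.mem t)).comp_hasDerivAt t (hγ.hasDerivAt t)).clm_apply
    (hγ.hasDerivAt_deriv t)
  simpa [hnormal] using
    ((hγ.hasDerivAt_deriv t).congr_of_eventuallyEq (.of_forall hfix)).unique hderiv

/-- The equation is linear because `fderiv ℝ P` and `fderiv ℝ N` annihilate the nullity part of the
velocity. -/
theorem hasDerivAt_deriv_sub_apply (hγ : IsGeodesicOn .euclidean S γ) (hS : IsSubmanifold S m)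
    (hP : IsProjectionExtension (n + 1) S (TangentAt S) P)
    (hN : IsProjectionExtension (k + 1) (minNullitySet .euclidean S) (nullitySubmodule S) N)
    (ht : γ t ∈ minNullitySet .euclidean S) :
    HasDerivAt (fun s => deriv γ s - N (γ s) (deriv γ s))
      (((1 - N (γ t)) ∘L ContinuousLinearMap.apply ℝ ℝ^D (deriv γ t) ∘L fderiv ℝ P (γ t) -
          ContinuousLinearMap.apply ℝ ℝ^D (deriv γ t) ∘L fderiv ℝ N (γ t) : ℝ^D →L[ℝ] ℝ^D)
        (deriv γ t - N (γ t) (deriv γ t))) t := by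
  have hmem := hN.apply_mem ht (deriv γ t)
  have hdP := ((mem_nullitySubmodule_iff hS hP (hγ.mem t)).1 hmem).2
  have hdN := fderiv_nullityProj_eq_zero_of_mem hS hN ht hmem
  have hNγ' := ((hN.hasFDerivAt ht).comp_hasDerivAt t (hγ.hasDerivAt t)).clm_apply
    (hγ.hasDerivAt_deriv t)
  refine ((hγ.hasDerivAt_deriv t).sub hNγ').congr_deriv ?_
  simp [hγ.deriv_deriv hP t, hdP, hdN, sub_sub, add_comm]

theorem deriv_mem_nullitySubmodule (hγ : IsGeodesicOn .euclidean S γ) (hS : IsSubmanifold S m)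
    (hA : ∀ s ∈ Icc 0 t, γ s ∈ minNullitySet .euclidean S)
    (h0 : deriv γ 0 ∈ nullitySubmodule S (γ 0)) (ht : 0 ≤ t) :
    deriv γ t ∈ nullitySubmodule S (γ t) := by
  obtain ⟨P, hP⟩ := hS.exists_isProjectionExtension 1
  obtain ⟨N, hN⟩ := hS.exists_isProjectionExtension_nullitySubmodule 1
  have hzero := eq_zero_of_hasDerivAt_clm_apply (fun s hs => ?_)
    (fun s hs => hγ.hasDerivAt_deriv_sub_apply hS hP hN (hA s hs))
    (by simp [(hN.apply_eq_self_iff (hA 0 ⟨le_rfl, ht⟩)).2 h0]) t ⟨ht, le_rfl⟩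
  · exact (hN.apply_eq_self_iff (hA t ⟨ht, le_rfl⟩)).1 (sub_eq_zero.1 hzero).symm
  · have hγs := (hγ.hasDerivAt s).continuousAt
    have hev := (ContinuousLinearMap.apply ℝ ℝ^D).continuous.continuousAt.comp
      (hγ.hasDerivAt_deriv s).continuousAt
    have hNγ := (hN.hasFDerivAt (hA s hs)).continuousAt.comp hγs
    have hdN := (hN.contDiffAt_fderiv (hA s hs)).continuousAt.comp hγs
    have hdP := (hP.contDiffAt_fderiv (hγ.mem s)).continuousAt.comp hγs
    exact (((continuousAt_const.sub hNγ).clm_comp (hev.clm_comp hdP)).sub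
      (hev.clm_comp hdN)).continuousWithinAt

theorem deriv_eq_deriv_zero (hγ : IsGeodesicOn .euclidean S γ) (hS : IsSubmanifold S m)
    (hA : ∀ s ∈ Ico 0 b, γ s ∈ minNullitySet .euclidean S)
    (h0 : deriv γ 0 ∈ nullitySubmodule S (γ 0)) (ht : t ∈ Icc 0 b) :
    deriv γ t = deriv γ 0 := by
  obtain ⟨P, hP⟩ := hS.exists_isProjectionExtension 1
  refine constant_of_has_deriv_right_zero hγ.contDiff_deriv.continuous.continuousOn
    (fun s hs => ?_) t ht
  have hmem := hγ.deriv_mem_nullitySubmodule hS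
    (fun r hr => hA r ⟨hr.1, hr.2.trans_lt hs.2⟩) h0 hs.1
  have hacc : deriv (deriv γ) s = 0 := by
    rw [hγ.deriv_deriv hP s, ((mem_nullitySubmodule_iff hS hP (hγ.mem s)).1 hmem).2]
    rfl
  exact hacc ▸ (hγ.hasDerivAt_deriv s).hasDerivWithinAt

theorem eq_add_smul (hγ : IsGeodesicOn .euclidean S γ) (hS : IsSubmanifold S m)
    (hA : ∀ s ∈ Ico 0 b, γ s ∈ minNullitySet .euclidean S)
    (h0 : deriv γ 0 ∈ nullitySubmodule S (γ 0)) (ht : t ∈ Icc 0 b) :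
    γ t = γ 0 + t • deriv γ 0 := by
  refine eq_of_has_deriv_right_eq (f' := fun _ => deriv γ 0) (fun s hs => ?_)
    (fun s _ => (hasDerivAt_add_smul_const _ _ s).hasDerivWithinAt)
    hγ.smooth.continuous.continuousOn (by fun_prop) (by simp) t ht
  rw [← hγ.deriv_eq_deriv_zero hS hA h0 (Ico_subset_Icc_self hs)]
  exact (hγ.hasDerivAt s).hasDerivWithinAt

theorem isNullitySegment (hγ : IsGeodesicOn .euclidean S γ) (hS : IsSubmanifold S m) (hb : 0 < b)
    (hA : ∀ s ∈ Ico 0 b, γ s ∈ minNullitySet .euclidean S)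
    (h0 : deriv γ 0 ∈ nullitySubmodule S (γ 0)) :
    IsNullitySegment S (γ 0) (deriv γ 0) b where
  pos := hb
  mem_minNullitySet t ht := hγ.eq_add_smul hS hA h0 (Ico_subset_Icc_self ht) ▸ hA t ht
  mem_nullitySubmodule t ht := by
    rw [← hγ.eq_add_smul hS hA h0 (Ico_subset_Icc_self ht),
      ← hγ.deriv_eq_deriv_zero hS hA h0 (Ico_subset_Icc_self ht)]
    exact hγ.deriv_mem_nullitySubmodule hS (fun r hr => hA r ⟨hr.1, hr.2.trans_lt ht.2⟩) h0 ht.1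
  endpoint_mem := hγ.eq_add_smul hS hA h0 ⟨hb.le, le_rfl⟩ ▸ hγ.mem b

theorem mem_minNullitySet (hγ : IsGeodesicOn .euclidean S γ) (hS : IsSubmanifold S m)
    (hp : γ 0 ∈ minNullitySet .euclidean S) (h0 : deriv γ 0 ∈ nullitySubmodule S (γ 0))
    (ht : 0 ≤ t) : γ t ∈ minNullitySet .euclidean S := by
  have hopen : IsOpen (γ ⁻¹' minNullitySet .euclidean S) := isOpen_iff_mem_nhds.2 fun s hs =>
    (tendsto_nhdsWithin_iff.2 ⟨hγ.smooth.continuous.continuousAt, .of_forall hγ.mem⟩)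
      (minNullitySet_mem_nhdsWithin hS hs)
  refine Ici_subset_of_isOpen_of_forall_Ico_subset hopen (fun b hb hA => ?_) ht
  rcases hb.eq_or_lt with rfl | hb
  · exact hp
  · rw [mem_preimage, hγ.eq_add_smul hS hA h0 ⟨hb.le, le_rfl⟩]
    exact (hγ.isNullitySegment hS hb hA h0).endpoint_mem_minNullitySet hS

end IsGeodesicOn

theorem GeodComplete.add_smul_mem_of_nonneg (hcomplete : GeodComplete .euclidean S)
    (hS : IsSubmanifold S m) (hp : p ∈ minNullitySet .euclidean S) (hv : v ∈ nullitySubmodule S p)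
    (ht : 0 ≤ t) :
    p + t • v ∈ minNullitySet .euclidean S ∧ v ∈ nullitySubmodule S (p + t • v) := by
  obtain ⟨γ, hγ, rfl, rfl⟩ := hcomplete p hp.1 v (nullitySubmodule_le_tangentAt hv)
  have hA : ∀ s, 0 ≤ s → γ s ∈ minNullitySet .euclidean S := fun s =>
    hγ.mem_minNullitySet hS hp hv
  have hmem := hγ.deriv_mem_nullitySubmodule hS (fun s hs => hA s hs.1) hv ht
  have hIco : ∀ s ∈ Ico 0 t, γ s ∈ minNullitySet .euclidean S := fun s hs => hA s hs.1
  rw [hγ.deriv_eq_deriv_zero hS hIco hv ⟨ht, le_rfl⟩] at hmem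
  rw [← hγ.eq_add_smul hS hIco hv ⟨ht, le_rfl⟩]
  exact ⟨hA t ht, hmem⟩

theorem GeodComplete.add_smul_mem (hcomplete : GeodComplete .euclidean S)
    (hS : IsSubmanifold S m) (hp : p ∈ minNullitySet .euclidean S) (hv : v ∈ nullitySubmodule S p)
    (t : ℝ) :
    p + t • v ∈ minNullitySet .euclidean S ∧ v ∈ nullitySubmodule S (p + t • v) := by
  rcases le_total 0 t with ht | ht
  · exact hcomplete.add_smul_mem_of_nonneg hS hp hv ht
  · simpa using hcomplete.add_smul_mem_of_nonneg hS hp (neg_mem hv) (neg_nonneg.2 ht)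

theorem nullitySubmodule_eq_of_forall_deriv_mem (hS : IsSubmanifold S m) (hc : Differentiable ℝ c)
    (hcA : ∀ t, c t ∈ minNullitySet .euclidean S)
    (hcN : ∀ t, deriv c t ∈ nullitySubmodule S (c t)) (s t : ℝ) :
    nullitySubmodule S (c s) = nullitySubmodule S (c t) := by
  obtain ⟨N, hN⟩ := hS.exists_isProjectionExtension_nullitySubmodule 1
  have hderiv : ∀ t, HasDerivAt (fun r => N (c r)) 0 t := fun t =>
    fderiv_nullityProj_eq_zero_of_mem hS hN (hcA t) (hcN t) ▸
      (hN.hasFDerivAt (hcA t)).comp_hasDerivAt t (hc t).hasDerivAt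
  simpa [hN.eq_starProjection _ (hcA _), Submodule.starProjection_inj] using
    is_const_of_deriv_eq_zero (fun t => (hderiv t).differentiableAt) (fun t => (hderiv t).deriv) s t

theorem sub_mem_nullitySubmodule_of_forall_deriv_mem (hS : IsSubmanifold S m)
    (hc : Differentiable ℝ c) (hcA : ∀ t, c t ∈ minNullitySet .euclidean S)
    (hcN : ∀ t, deriv c t ∈ nullitySubmodule S (c t)) (s t : ℝ) :
    c t - c s ∈ nullitySubmodule S (c s) := by
  let K := nullitySubmodule S (c s)
  have hderiv : ∀ r, HasDerivAt (fun r => c r - K.starProjection (c r)) 0 r := fun r => by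
    have hK : K = nullitySubmodule S (c r) :=
      nullitySubmodule_eq_of_forall_deriv_mem hS hc hcA hcN s r
    refine ((hc r).hasDerivAt.sub
      (K.starProjection.hasFDerivAt.comp_hasDerivAt r (hc r).hasDerivAt)).congr_deriv ?_
    rw [K.starProjection_eq_self_iff.2 (hK ▸ hcN r), sub_self]
  have hconst := is_const_of_deriv_eq_zero (fun r => (hderiv r).differentiableAt)
    (fun r => (hderiv r).deriv) t s
  rw [← K.starProjection_eq_self_iff, map_sub]
  exact (sub_eq_sub_iff_sub_eq_sub.1 hconst).symm

end Geodesics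

end Submanifolds

/-- **Nullity leaves of complete Euclidean submanifolds are affine subspaces.**
Let `M = S` be a complete Riemannian manifold isometrically immersed as an `n`-dimensional
submanifold of `ℝ^{n+k}`, with nullity distribution `𝒩`, and let `p` be a point of minimal index
of nullity `μ`.  Then the maximal integral manifold of `𝒩` through `p` is an open subset of the
affine subspace `p + 𝒩_p` which, being complete, is the whole affine subspace; in particular `M`
contains the full `μ`-dimensional affine subspace `p + 𝒩_p`. -/
theorem nullity_leaf_eq_affine_subspace (n codim : ℕ)
    (S : Set (EuclideanSpace ℝ (Fin (n + codim))))
    (hsub : IsSubmanifold S n)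
    (hcomplete : GeodComplete .euclidean S)
    (p : EuclideanSpace ℝ (Fin (n + codim)))
    (hp : p ∈ minNullitySet .euclidean S) :
    leafThrough .euclidean S (minNullitySet .euclidean S) p
        = {q | q - p ∈ Submodule.span ℝ (nullityAt .euclidean S p)} ∧
      {q | q - p ∈ Submodule.span ℝ (nullityAt .euclidean S p)} ⊆ S := by
  have hmem : ∀ {q}, q - p ∈ nullitySubmodule S p → ∀ t : ℝ,
      p + t • (q - p) ∈ minNullitySet .euclidean S ∧
        q - p ∈ nullitySubmodule S (p + t • (q - p)) :=
    fun hq => hcomplete.add_smul_mem hsub hp hq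
  refine ⟨Subset.antisymm ?_ fun q hq => ?_, fun q hq => by simpa using (hmem hq 1).1.1⟩
  · rintro q ⟨c, hc, hcA, hcN, rfl, rfl⟩
    exact sub_mem_nullitySubmodule_of_forall_deriv_mem hsub (hc.differentiable (by simp)) hcA
      (fun t => (mem_nullitySubmodule_iff_mem_nullityAt hsub (hcA t).1).2 (hcN t)) 0 1
  · refine ⟨fun t => p + t • (q - p), by fun_prop, fun t => (hmem hq t).1, fun t => ?_,
      by simp, by simp⟩
    rw [(hasDerivAt_add_smul_const p (q - p) t).deriv]
    exact (mem_nullitySubmodule_iff_mem_nullityAt hsub (hmem hq t).1.1).1 (hmem hq t).2
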